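/- Let K ≥ 1 and λ > 0, and let G be a connected K-almost-regular bipartite graph on n vertices with no isolated vertices which is a λ-expander, with n sufficiently large. Then G has mixing time k for some k ≤ (30K^2/λ^2)·log n. -/

import Mathlib

/-!
The expansion hypothesis says that the random walk has conductance at least `φ = lam / K`: a set
`S` of at most half of the vertices sends out at least `lam * d(G) * |S| ≥ φ * vol S` edges, where
`vol S` is the sum of the degrees in `S`. Cheeger's inequality (`cheeger`) turns this into a
spectral gap: `⟪f, M f⟫ ≤ (1 - φ² / 2) ‖f‖²` for the degree-weighted inner product and every `f`
orthogonal to the constants.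

Let `χ` be the sign function of the bipartition. Multiplication by `χ` negates the quadratic form
of `M`, so on the `M`-invariant space of functions orthogonal to both `1` and `χ` the form is
bounded by `1 - φ² / 2` in absolute value. As `M` is self-adjoint, it contracts norms on that
space by this factor; `step_contract` derives this from polarization, without diagonalizing `M`.

Finally, the quantity to be bounded is the value at `v` of `M ^ k` applied to the projection of the
indicator of `u` onto that space, so its square is at most `(1 - φ² / 2) ^ (2 * k) * d(u) / d(v)`.
Since `d(u) / d(v) ≤ n`, the choice `k = ⌊30 φ⁻² log n⌋` is more than sufficient.

Cheeger's inequality and the contraction property are proved for a symmetric nonnegative weight function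
`a : V → V → ℝ`, the degree of `v` being `∑ u, a v u`.
-/

open Finset
open scoped Classical

/-- The average degree of a graph. -/
noncomputable def avgDeg {V : Type} [Fintype V] (G : SimpleGraph V) : ℝ :=
  (∑ v : V, (G.degree v : ℝ)) / (Fintype.card V : ℝ)

/-- A graph is `K`-almost-regular if its maximum degree is at most `K` times its
minimum degree. -/
noncomputable def AlmostRegular {V : Type} [Fintype V] (K : ℝ) (G : SimpleGraph V) : Prop :=
  (G.maxDegree : ℝ) ≤ K * (G.minDegree : ℝ)

/-- The number of edges of `G` with one endpoint in `X` and the other outside of `X`. -/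
noncomputable def crossCount {V : Type} [Fintype V] (G : SimpleGraph V) (X : Finset V) : ℕ :=
  (G.edgeFinset.filter (fun e => ∃ a ∈ X, ∃ b ∈ Xᶜ, e = s(a, b))).card

/-- `G` is a `lam`-expander: every vertex set `X` with `|X| ≤ n/2` satisfies
`e(X, X̄) ≥ lam · d(G) · |X|`. -/
noncomputable def IsExpander {V : Type} [Fintype V] (lam : ℝ) (G : SimpleGraph V) : Prop :=
  ∀ X : Finset V, (X.card : ℝ) ≤ (Fintype.card V : ℝ) / 2 →
    (crossCount G X : ℝ) ≥ lam * avgDeg G * (X.card : ℝ)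

/-- The transition matrix `M = D·A` of the nearest-neighbour random walk on `G`:
`M v u = 1/d(v)` if `vu` is an edge and `0` otherwise. -/
noncomputable def transMat {V : Type} [Fintype V] (G : SimpleGraph V) : Matrix V V ℝ :=
  fun v u => if G.Adj v u then (1 : ℝ) / (G.degree v : ℝ) else 0

/-- `{P, Pᶜ}` is a bipartition of `G`: every edge crosses between `P` and its complement. -/
def IsBipartition {V : Type} (G : SimpleGraph V) (P : Finset V) : Prop :=
  ∀ a b, G.Adj a b → (a ∈ P ↔ b ∉ P)

/-- A bipartite graph `G` with bipartition `{P, Pᶜ}` has mixing time `k` if for all vertices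
`u, v`, `|(M^k)_{v,u} − (d(u)/(2m))·(1 + (−1)^{k + 1_{v∈P} + 1_{u∈P}})| ≤ 1/n²`. -/
noncomputable def HasMixingTime {V : Type} [Fintype V] (G : SimpleGraph V) (P : Finset V)
    (k : ℕ) : Prop :=
  ∀ v u : V,
    |((transMat G ^ k) v u) - ((G.degree u : ℝ) / (2 * (G.edgeFinset.card : ℝ))) *
      (1 + (-1 : ℝ) ^ (k + (if v ∈ P then 1 else 0) + (if u ∈ P then 1 else 0)))| ≤
      1 / (Fintype.card V : ℝ) ^ 2

/-- The probability of a given trajectory `f` of `t` steps of the nearest-neighbour random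
walk: the product of `1/d(v_i)` over `0 ≤ i ≤ t−1`. -/
noncomputable def walkProb {V : Type} [Fintype V] (G : SimpleGraph V) (t : ℕ)
    (f : Fin (t + 1) → V) : ℝ :=
  ∏ i : Fin t, (1 : ℝ) / (G.degree (f i.castSucc) : ℝ)

/-- `f : Fin (t+1) → V` is a walk in `G`: consecutive vertices are adjacent. -/
def IsWalkFun {V : Type} (G : SimpleGraph V) (t : ℕ) (f : Fin (t + 1) → V) : Prop :=
  ∀ i : Fin t, G.Adj (f i.castSucc) (f i.succ)

/-- The probability that the nearest-neighbour random walk of length `t` started at `v`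
satisfies the event `E`. -/
noncomputable def walkEventProb {V : Type} [Fintype V] (G : SimpleGraph V) (v : V) (t : ℕ)
    (E : (Fin (t + 1) → V) → Prop) : ℝ :=
  ∑ f : Fin (t + 1) → V, if f 0 = v ∧ IsWalkFun G t f ∧ E f then walkProb G t f else 0

section Weighted

variable {V : Type} [Fintype V]

/-! ### Cheeger's inequality -/

/-- The coarea inequality. The support of `w` is peeled off layer by layer: subtracting from `w` its
smallest positive value times the indicator of its support changes both sides by an instance of
the expansion hypothesis, and shrinks the support. -/
lemma coarea (a : V → V → ℝ) (hs : ∀ u v, a u v = a v u) (φ : ℝ)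
    (hexp : ∀ S : Finset V, 2 * S.card ≤ Fintype.card V →
      φ * ∑ v ∈ S, ∑ u, a v u ≤ ∑ v ∈ S, ∑ u ∈ Sᶜ, a v u)
    (N : ℕ) : ∀ w : V → ℝ, (∀ v, 0 ≤ w v) → (univ.filter (fun v => 0 < w v)).card ≤ N →
      2 * (univ.filter (fun v => 0 < w v)).card ≤ Fintype.card V →
      2 * φ * ∑ v, (∑ u, a v u) * w v ≤ ∑ v, ∑ u, a v u * |w v - w u| := by
  induction N with
  | zero =>
    intro w hw h0 _
    have hz : ∀ v, w v = 0 := by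
      intro v
      by_contra hne
      have : v ∈ univ.filter (fun v => 0 < w v) := by
        simpa using lt_of_le_of_ne (hw v) (Ne.symm hne)
      have := Finset.card_pos.mpr ⟨v, this⟩
      omega
    simp [hz]
  | succ N ih =>
    intro w hw hN hcard
    set S := univ.filter (fun v => 0 < w v) with hS
    rcases S.eq_empty_or_nonempty with he | hne
    · have hz : ∀ v, w v = 0 := by
        intro v
        by_contra hne
        have : v ∈ S := by
          simpa [hS] using lt_of_le_of_ne (hw v) (Ne.symm hne)
        simp [he] at this
      simp [hz]
    obtain ⟨x, hx, hmin⟩ := Finset.exists_min_image S w hne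
    have hxpos : 0 < w x := by simpa [hS] using hx
    set w' : V → ℝ := fun v => if v ∈ S then w v - w x else 0 with hw'
    have hout : ∀ v, v ∉ S → w v = 0 := by
      intro v hv
      have : ¬ 0 < w v := by simpa [hS] using hv
      exact le_antisymm (not_lt.mp this) (hw v)
    have hw'0 : ∀ v, 0 ≤ w' v := by
      intro v
      simp only [hw']
      split_ifs with h
      · linarith [hmin v h]
      · exact le_refl _
    have hsub : univ.filter (fun v => 0 < w' v) ⊆ S.erase x := by
      intro v hv
      have hv : 0 < w' v := by simpa using hv
      simp only [hw'] at hv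
      split_ifs at hv with h
      · refine Finset.mem_erase.mpr ⟨?_, h⟩
        rintro rfl
        simp at hv
      · simp at hv
    have hc := Finset.card_le_card hsub
    rw [Finset.card_erase_of_mem hx] at hc
    have key := ih w' hw'0 (by omega) (by omega)
    have hexpS := hexp S hcard
    set e : V → ℝ := fun v => if v ∈ S then 1 else 0 with he
    have hdec : ∀ v, w v = w' v + w x * e v := by
      intro v
      simp only [hw', he]
      split_ifs with h
      · ring
      · simp [hout v h]
    have habs : ∀ v u, |w v - w u| = |w' v - w' u| + w x * |e v - e u| := by
      intro v u
      rw [hdec v, hdec u]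
      by_cases hv : v ∈ S <;> by_cases hu : u ∈ S
      · simp [he, hv, hu]
      · have h1 : w' u = 0 := by simp [hw', hu]
        have h2 := hw'0 v
        simp only [he, hv, hu, if_true, if_false, h1]
        rw [abs_of_nonneg (by linarith), abs_of_nonneg (by linarith)]
        norm_num
      · have h1 : w' v = 0 := by simp [hw', hv]
        have h2 := hw'0 u
        simp only [he, hv, hu, if_true, if_false, h1]
        rw [abs_of_nonpos (by linarith), abs_of_nonpos (by linarith)]
        norm_num
      · simp [he, hv, hu]
    have hvol : ∑ v, (∑ u, a v u) * w v
        = ∑ v, (∑ u, a v u) * w' v + w x * ∑ v ∈ S, ∑ u, a v u := by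
      have : ∑ v ∈ S, ∑ u, a v u = ∑ v, (∑ u, a v u) * e v := by
        simp [he, Finset.sum_ite_mem]
      rw [this, Finset.mul_sum, ← Finset.sum_add_distrib]
      refine Finset.sum_congr rfl fun v _ => ?_
      rw [hdec v]; ring
    have hcut : ∑ v, ∑ u, a v u * |e v - e u| = 2 * ∑ v ∈ S, ∑ u ∈ Sᶜ, a v u := by
      have h1 : ∀ v u, a v u * |e v - e u|
          = a v u * (e v * (1 - e u)) + a u v * (e u * (1 - e v)) := by
        intro v u
        rw [hs u v]
        by_cases hv : v ∈ S <;> by_cases hu : u ∈ S <;> simp [he, hv, hu]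
      have h2 : ∑ v, ∑ u, a v u * (e v * (1 - e u)) = ∑ v ∈ S, ∑ u ∈ Sᶜ, a v u := by
        rw [← Finset.sum_filter_add_sum_filter_not univ (fun v => v ∈ S)]
        rw [Finset.sum_eq_zero (s := univ.filter (fun v => ¬ v ∈ S)), add_zero]
        · rw [Finset.filter_univ_mem]
          refine Finset.sum_congr rfl fun v hv => ?_
          rw [← Finset.sum_add_sum_compl S]
          rw [Finset.sum_eq_zero (s := S), zero_add]
          · refine Finset.sum_congr rfl fun u hu => ?_
            have hu : u ∉ S := by simpa using hu
            simp [he, hv, hu]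
          · intro u hu
            simp [he, hu]
        · intro v hv
          have hv : v ∉ S := by simpa using hv
          simp [he, hv]
      simp_rw [h1, Finset.sum_add_distrib]
      rw [Finset.sum_comm (f := fun v u => a u v * (e u * (1 - e v))), h2]
      ring
    have hsum : ∑ v, ∑ u, a v u * |w v - w u|
        = ∑ v, ∑ u, a v u * |w' v - w' u| + w x * ∑ v, ∑ u, a v u * |e v - e u| := by
      simp_rw [Finset.mul_sum, ← Finset.sum_add_distrib]
      refine Finset.sum_congr rfl fun v _ => Finset.sum_congr rfl fun u _ => ?_
      rw [habs]; ring
    rw [hsum, hcut, hvol]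
    have := mul_le_mul_of_nonneg_left hexpS hxpos.le
    nlinarith

lemma sum_right (a : V → V → ℝ) (hs : ∀ u v, a u v = a v u) (f : V → ℝ) :
    ∑ v, ∑ u, a v u * f u = ∑ v, (∑ u, a v u) * f v := by
  rw [Finset.sum_comm]
  refine Finset.sum_congr rfl fun v _ => ?_
  rw [Finset.sum_mul]
  exact Finset.sum_congr rfl fun u _ => by rw [hs]

lemma sum_left (a : V → V → ℝ) (f : V → ℝ) :
    ∑ v, ∑ u, a v u * f v = ∑ v, (∑ u, a v u) * f v := by
  refine Finset.sum_congr rfl fun v _ => ?_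
  rw [Finset.sum_mul]

/-- Cheeger's inequality for nonnegative functions supported on at most half of the vertices:
the coarea inequality for `g ^ 2`, combined with the Cauchy–Schwarz inequality. -/
lemma cheeger_half (a : V → V → ℝ) (hs : ∀ u v, a u v = a v u) (ha : ∀ u v, 0 ≤ a u v)
    (φ : ℝ) (hφ : 0 ≤ φ)
    (hexp : ∀ S : Finset V, 2 * S.card ≤ Fintype.card V →
      φ * ∑ v ∈ S, ∑ u, a v u ≤ ∑ v ∈ S, ∑ u ∈ Sᶜ, a v u)
    (g : V → ℝ) (hg : ∀ v, 0 ≤ g v)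
    (hcard : 2 * (univ.filter (fun v => 0 < g v)).card ≤ Fintype.card V) :
    φ ^ 2 * ∑ v, (∑ u, a v u) * g v ^ 2 ≤ ∑ v, ∑ u, a v u * (g v - g u) ^ 2 := by
  have hf : univ.filter (fun v => 0 < g v ^ 2) = univ.filter (fun v => 0 < g v) := by
    ext v
    simp only [mem_filter, mem_univ, true_and]
    exact ⟨fun h => lt_of_le_of_ne (hg v) (fun h0 => by simp [← h0] at h), fun h => by positivity⟩
  have h1 := coarea a hs φ hexp _ (fun v => g v ^ 2) (fun v => sq_nonneg _) le_rfl
    (by rw [hf]; exact hcard)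
  set N := ∑ v, (∑ u, a v u) * g v ^ 2 with hN
  set E := ∑ v, ∑ u, a v u * (g v - g u) ^ 2 with hE
  have hN0 : 0 ≤ N := Finset.sum_nonneg fun v _ =>
    mul_nonneg (Finset.sum_nonneg fun u _ => ha v u) (sq_nonneg _)
  have hE0 : 0 ≤ E := Finset.sum_nonneg fun v _ => Finset.sum_nonneg fun u _ =>
    mul_nonneg (ha v u) (sq_nonneg _)
  -- Cauchy–Schwarz in pointwise form: AM-GM for `|g v - g u|` and `φ / 2 * (g v + g u)`, followed by
  -- `(g v + g u)² ≤ 2 (g(v)² + g(u)²)`. The factor `φ / 2` is the optimal choice after summation.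
  have h2 : ∀ v u, φ * (a v u * |g v ^ 2 - g u ^ 2|)
      ≤ a v u * (g v - g u) ^ 2 + φ ^ 2 / 2 * (a v u * g v ^ 2) + φ ^ 2 / 2 * (a v u * g u ^ 2) := by
    intro v u
    have h3 : |g v ^ 2 - g u ^ 2| = |g v - g u| * (g v + g u) := by
      rw [show g v ^ 2 - g u ^ 2 = (g v - g u) * (g v + g u) by ring, abs_mul,
        abs_of_nonneg (add_nonneg (hg v) (hg u))]
    have h4 : φ * |g v ^ 2 - g u ^ 2|
        ≤ (g v - g u) ^ 2 + φ ^ 2 / 2 * g v ^ 2 + φ ^ 2 / 2 * g u ^ 2 := by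
      rw [h3]
      nlinarith [sq_nonneg (|g v - g u| - φ / 2 * (g v + g u)), sq_abs (g v - g u),
        mul_nonneg (sq_nonneg φ) (sq_nonneg (g v - g u))]
    nlinarith [mul_le_mul_of_nonneg_left h4 (ha v u)]
  have h5 : φ * ∑ v, ∑ u, a v u * |g v ^ 2 - g u ^ 2| ≤ E + φ ^ 2 * N := by
    have h6 : E + φ ^ 2 * N = ∑ v, ∑ u, (a v u * (g v - g u) ^ 2 + φ ^ 2 / 2 * (a v u * g v ^ 2)
        + φ ^ 2 / 2 * (a v u * g u ^ 2)) := by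
      simp_rw [Finset.sum_add_distrib, ← Finset.mul_sum]
      rw [sum_left a (fun v => g v ^ 2), sum_right a hs (fun v => g v ^ 2)]
      ring
    rw [h6]
    simp_rw [Finset.mul_sum]
    exact Finset.sum_le_sum fun v _ => Finset.sum_le_sum fun u _ => h2 v u
  nlinarith [mul_le_mul_of_nonneg_left h1 hφ]

/-- Every function on a nonempty finite set has a median. -/
lemma exists_median [Nonempty V] (f : V → ℝ) : ∃ c : ℝ,
    2 * (univ.filter (fun v => c < f v)).card ≤ Fintype.card V ∧
    2 * (univ.filter (fun v => f v < c)).card ≤ Fintype.card V := by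
  set T := univ.filter (fun v => 2 * (univ.filter (fun u => f v < f u)).card ≤ Fintype.card V)
    with hT
  have hTne : T.Nonempty := by
    obtain ⟨x, -, hx⟩ := Finset.exists_max_image univ f univ_nonempty
    refine ⟨x, ?_⟩
    simp only [hT, mem_filter, mem_univ, true_and]
    rw [Finset.filter_false_of_mem (fun u hu => not_lt.mpr (hx u hu))]
    simp
  obtain ⟨x, hx, hmin⟩ := Finset.exists_min_image T f hTne
  refine ⟨f x, by simpa [hT] using hx, ?_⟩
  by_contra hlt
  push Not at hlt
  set L := univ.filter (fun v => f v < f x) with hL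
  have hLne : L.Nonempty := by
    rw [← Finset.card_pos]; omega
  -- The largest value below the candidate would be a smaller candidate.
  obtain ⟨y, hy, hmax⟩ := Finset.exists_max_image L f hLne
  have hyx : f y < f x := by simpa [hL] using hy
  have hyT : y ∈ T := by
    simp only [hT, mem_filter, mem_univ, true_and]
    have hsub : univ.filter (fun u => f y < f u) ⊆ Lᶜ := by
      intro u hu
      have hu : f y < f u := by simpa using hu
      rw [Finset.mem_compl]
      intro huL
      exact absurd (hmax u huL) (not_le.mpr hu)
    have h1 := Finset.card_le_card hsub
    have h2 := Finset.card_add_card_compl L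
    omega
  exact absurd (hmin y hyT) (not_le.mpr hyx)

/-- Cheeger's inequality. The part of `f` above a median and the part below it are both supported
on at most half of the vertices, and shifting `f` by the median only increases its norm. -/
lemma cheeger [Nonempty V] (a : V → V → ℝ) (hs : ∀ u v, a u v = a v u) (ha : ∀ u v, 0 ≤ a u v)
    (φ : ℝ) (hφ : 0 ≤ φ)
    (hexp : ∀ S : Finset V, 2 * S.card ≤ Fintype.card V →
      φ * ∑ v ∈ S, ∑ u, a v u ≤ ∑ v ∈ S, ∑ u ∈ Sᶜ, a v u)
    (f : V → ℝ) (hf : ∑ v, (∑ u, a v u) * f v = 0) :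
    φ ^ 2 * ∑ v, (∑ u, a v u) * f v ^ 2 ≤ ∑ v, ∑ u, a v u * (f v - f u) ^ 2 := by
  obtain ⟨c, hc1, hc2⟩ := exists_median f
  have hg := cheeger_half a hs ha φ hφ hexp (fun v => max (f v - c) 0) (fun v => le_max_right _ _)
    (by simpa using hc1)
  have hh := cheeger_half a hs ha φ hφ hexp (fun v => max (c - f v) 0) (fun v => le_max_right _ _)
    (by simpa using hc2)
  have hsq : ∀ v, max (f v - c) 0 ^ 2 + max (c - f v) 0 ^ 2 = (f v - c) ^ 2 := by
    intro v
    rcases le_total (f v) c with h | h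
    · rw [max_eq_right (by linarith), max_eq_left (by linarith)]; ring
    · rw [max_eq_left (by linarith), max_eq_right (by linarith)]; ring
  have hnorm : ∑ v, (∑ u, a v u) * f v ^ 2 ≤ ∑ v, (∑ u, a v u) * max (f v - c) 0 ^ 2
      + ∑ v, (∑ u, a v u) * max (c - f v) 0 ^ 2 := by
    rw [← Finset.sum_add_distrib]
    have h1 : ∑ v, ((∑ u, a v u) * max (f v - c) 0 ^ 2 + (∑ u, a v u) * max (c - f v) 0 ^ 2)
        = ∑ v, (∑ u, a v u) * f v ^ 2 - 2 * c * ∑ v, (∑ u, a v u) * f v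
          + c ^ 2 * ∑ v, ∑ u, a v u := by
      rw [Finset.mul_sum, Finset.mul_sum, ← Finset.sum_sub_distrib, ← Finset.sum_add_distrib]
      refine Finset.sum_congr rfl fun v _ => ?_
      rw [← mul_add, hsq]; ring
    rw [h1, hf]
    have : 0 ≤ ∑ v, ∑ u, a v u := Finset.sum_nonneg fun v _ => Finset.sum_nonneg fun u _ => ha v u
    nlinarith [mul_nonneg (sq_nonneg c) this]
  have hpt : ∀ v u, (max (f v - c) 0 - max (f u - c) 0) ^ 2 + (max (c - f v) 0 - max (c - f u) 0) ^ 2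
      ≤ (f v - f u) ^ 2 := by
    intro v u
    rcases le_total (f v) c with h | h <;> rcases le_total (f u) c with h' | h'
    · rw [max_eq_right (by linarith), max_eq_right (by linarith), max_eq_left (by linarith),
        max_eq_left (by linarith)]; nlinarith
    · rw [max_eq_right (by linarith), max_eq_left (by linarith), max_eq_left (by linarith),
        max_eq_right (by linarith)]
      nlinarith [mul_nonneg (sub_nonneg.mpr h) (sub_nonneg.mpr h')]
    · rw [max_eq_left (by linarith), max_eq_right (by linarith), max_eq_right (by linarith),
        max_eq_left (by linarith)]
      nlinarith [mul_nonneg (sub_nonneg.mpr h) (sub_nonneg.mpr h')]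
    · rw [max_eq_left (by linarith), max_eq_left (by linarith), max_eq_right (by linarith),
        max_eq_right (by linarith)]; nlinarith
  have hen : ∑ v, ∑ u, a v u * (max (f v - c) 0 - max (f u - c) 0) ^ 2
      + ∑ v, ∑ u, a v u * (max (c - f v) 0 - max (c - f u) 0) ^ 2
      ≤ ∑ v, ∑ u, a v u * (f v - f u) ^ 2 := by
    simp_rw [← Finset.sum_add_distrib, ← mul_add]
    exact Finset.sum_le_sum fun v _ => Finset.sum_le_sum fun u _ =>
      mul_le_mul_of_nonneg_left (hpt v u) (ha v u)
  have := mul_le_mul_of_nonneg_left hnorm (sq_nonneg φ)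
  linarith

/-! ### Contraction on the complement of the two trivial eigenfunctions -/

lemma energy_eq (a : V → V → ℝ) (hs : ∀ u v, a u v = a v u) (f : V → ℝ) :
    ∑ v, ∑ u, a v u * (f v - f u) ^ 2
      = 2 * ∑ v, (∑ u, a v u) * f v ^ 2 - 2 * ∑ v, ∑ u, a v u * (f v * f u) := by
  have h1 := sum_left a (fun v => f v ^ 2)
  have h2 := sum_right a hs (fun v => f v ^ 2)
  have : ∑ v, ∑ u, a v u * (f v - f u) ^ 2 = ∑ v, ∑ u, a v u * f v ^ 2
      + ∑ v, ∑ u, a v u * f u ^ 2 - 2 * ∑ v, ∑ u, a v u * (f v * f u) := by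
    simp_rw [Finset.mul_sum, ← Finset.sum_add_distrib, ← Finset.sum_sub_distrib]
    exact Finset.sum_congr rfl fun v _ => Finset.sum_congr rfl fun u _ => by ring
  rw [this, h1, h2]; ring

/-- One step of the walk, `h = M g`, contracts the weighted norm by the factor `1 - φ² / 2` on
functions `g` orthogonal to the constants and to the sign function `χ` of the bipartition. Besides
the norm bound, the conclusion records that `h` has the same orthogonality properties. -/
lemma step_contract [Nonempty V] (a : V → V → ℝ) (hs : ∀ u v, a u v = a v u)
    (ha : ∀ u v, 0 ≤ a u v) (φ : ℝ) (hφ : 0 ≤ φ) (hφ1 : φ ≤ 1)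
    (hexp : ∀ S : Finset V, 2 * S.card ≤ Fintype.card V →
      φ * ∑ v ∈ S, ∑ u, a v u ≤ ∑ v ∈ S, ∑ u ∈ Sᶜ, a v u)
    (χ : V → ℝ) (hχ : ∀ v, χ v ^ 2 = 1) (hbip : ∀ v u, a v u * χ u = - (a v u * χ v))
    (g h : V → ℝ) (hh : ∀ v, (∑ u, a v u) * h v = ∑ u, a v u * g u)
    (hg1 : ∑ v, (∑ u, a v u) * g v = 0) (hg2 : ∑ v, (∑ u, a v u) * (χ v * g v) = 0) :
    ∑ v, (∑ u, a v u) * h v = 0 ∧ ∑ v, (∑ u, a v u) * (χ v * h v) = 0 ∧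
    ∑ v, (∑ u, a v u) * h v ^ 2 ≤ (1 - φ ^ 2 / 2) ^ 2 * ∑ v, (∑ u, a v u) * g v ^ 2 := by
  have hh1 : ∑ v, (∑ u, a v u) * h v = 0 := by
    simp_rw [hh]; rw [sum_right a hs, hg1]
  have hh2 : ∑ v, (∑ u, a v u) * (χ v * h v) = 0 := by
    have h1 : ∀ v, (∑ u, a v u) * (χ v * h v) = ∑ u, a v u * (-(χ u * g u)) := by
      intro v
      rw [mul_left_comm, hh, Finset.mul_sum]
      refine Finset.sum_congr rfl fun u _ => ?_
      linear_combination g u * hbip v u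
    simp_rw [h1]
    rw [sum_right a hs]
    simp only [mul_neg, Finset.sum_neg_distrib, hg2, neg_zero]
  refine ⟨hh1, hh2, ?_⟩
  set s := 1 - φ ^ 2 / 2 with hsdef
  have hs0 : 0 < s := by rw [hsdef]; nlinarith
  have upper : ∀ f : V → ℝ, ∑ v, (∑ u, a v u) * f v = 0 →
      ∑ v, ∑ u, a v u * (f v * f u) ≤ s * ∑ v, (∑ u, a v u) * f v ^ 2 := by
    intro f hf
    have h1 := cheeger a hs ha φ hφ hexp f hf
    rw [energy_eq a hs] at h1
    rw [hsdef]
    linarith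
  have lower : ∀ f : V → ℝ, ∑ v, (∑ u, a v u) * (χ v * f v) = 0 →
      -(∑ v, ∑ u, a v u * (f v * f u)) ≤ s * ∑ v, (∑ u, a v u) * f v ^ 2 := by
    intro f hf
    have h1 := upper (fun v => χ v * f v) hf
    have h2 : ∑ v, (∑ u, a v u) * (χ v * f v) ^ 2 = ∑ v, (∑ u, a v u) * f v ^ 2 :=
      Finset.sum_congr rfl fun v _ => by rw [mul_pow, hχ, one_mul]
    have h3 : ∑ v, ∑ u, a v u * ((χ v * f v) * (χ u * f u)) = -(∑ v, ∑ u, a v u * (f v * f u)) := by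
      simp_rw [← Finset.sum_neg_distrib]
      refine Finset.sum_congr rfl fun v _ => Finset.sum_congr rfl fun u _ => ?_
      linear_combination (χ v * f v * f u) * hbip v u - (a v u * f v * f u) * hχ v
    rw [h2, h3] at h1
    exact h1
  set N := ∑ v, (∑ u, a v u) * g v ^ 2 with hN
  set H := ∑ v, (∑ u, a v u) * h v ^ 2 with hH
  -- Polarization with the two functions `s g ± h`.
  have hp := upper (fun v => s * g v + h v) (by
    simp_rw [mul_add, Finset.sum_add_distrib, mul_left_comm _ s, ← Finset.mul_sum]
    rw [hg1, hh1]; ring)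
  have hm := lower (fun v => s * g v - h v) (by
    have h1 : ∀ v, (∑ u, a v u) * (χ v * (s * g v - h v))
        = s * ((∑ u, a v u) * (χ v * g v)) - (∑ u, a v u) * (χ v * h v) := fun v => by ring
    simp_rw [h1, Finset.sum_sub_distrib, ← Finset.mul_sum]
    rw [hg2, hh2]; ring)
  have hpar : ∑ v, (∑ u, a v u) * (s * g v + h v) ^ 2 + ∑ v, (∑ u, a v u) * (s * g v - h v) ^ 2
      = 2 * s ^ 2 * N + 2 * H := by
    rw [hN, hH, Finset.mul_sum, Finset.mul_sum, ← Finset.sum_add_distrib,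
      ← Finset.sum_add_distrib]
    exact Finset.sum_congr rfl fun v _ => by ring
  have hcross1 : ∑ v, ∑ u, a v u * (h v * g u) = H := by
    rw [hH]
    refine Finset.sum_congr rfl fun v _ => ?_
    rw [show (∑ u, a v u) * h v ^ 2 = h v * ((∑ u, a v u) * h v) by ring, hh, Finset.mul_sum]
    exact Finset.sum_congr rfl fun u _ => by ring
  have hcross2 : ∑ v, ∑ u, a v u * (g v * h u) = H := by
    rw [← hcross1, Finset.sum_comm]
    exact Finset.sum_congr rfl fun v _ => Finset.sum_congr rfl fun u _ => by rw [hs]; ring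
  have hpol : ∑ v, ∑ u, a v u * ((s * g v + h v) * (s * g u + h u))
      - ∑ v, ∑ u, a v u * ((s * g v - h v) * (s * g u - h u)) = 4 * s * H := by
    have : 4 * s * H = 2 * s * ∑ v, ∑ u, a v u * (h v * g u)
        + 2 * s * ∑ v, ∑ u, a v u * (g v * h u) := by
      rw [hcross1, hcross2]; ring
    rw [this]
    simp_rw [Finset.mul_sum, ← Finset.sum_add_distrib, ← Finset.sum_sub_distrib]
    exact Finset.sum_congr rfl fun v _ => Finset.sum_congr rfl fun u _ => by ring
  have h4 : 4 * s * H ≤ s * (2 * s ^ 2 * N + 2 * H) := by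
    rw [← hpol, ← hpar, mul_add]; linarith
  have h5 : 4 * H ≤ 2 * s ^ 2 * N + 2 * H := by
    refine le_of_mul_le_mul_left ?_ hs0
    linarith
  linarith

end Weighted

/-! ### The walk on a graph -/

section Graph

variable {V : Type} [Fintype V]

/-- The adjacency matrix as a real weight function. -/
noncomputable def adjWeight (G : SimpleGraph V) (v u : V) : ℝ := if G.Adj v u then 1 else 0

lemma adjWeight_symm {V : Type} (G : SimpleGraph V) (u v : V) : adjWeight G u v = adjWeight G v u := by
  simp [adjWeight, G.adj_comm]

lemma adjWeight_nonneg {V : Type} (G : SimpleGraph V) (u v : V) : 0 ≤ adjWeight G u v := by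
  unfold adjWeight; split_ifs <;> norm_num

lemma sum_adjWeight (G : SimpleGraph V) (v : V) : ∑ u, adjWeight G v u = (G.degree v : ℝ) := by
  simp only [adjWeight, Finset.sum_boole]
  congr 1
  rw [← G.card_neighborFinset_eq_degree, G.neighborFinset_eq_filter]

lemma crossCount_le (G : SimpleGraph V) (S : Finset V) :
    (crossCount G S : ℝ) ≤ ∑ v ∈ S, ∑ u ∈ Sᶜ, adjWeight G v u := by
  have h1 : ∑ v ∈ S, ∑ u ∈ Sᶜ, adjWeight G v u
      = (((S ×ˢ Sᶜ).filter (fun p => G.Adj p.1 p.2)).card : ℝ) := by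
    rw [← Finset.sum_product' (f := fun v u => adjWeight G v u)]
    simp [adjWeight, Finset.sum_boole]
  rw [h1]
  unfold crossCount
  refine Nat.cast_le.mpr (le_trans (Finset.card_le_card ?_)
    (Finset.card_image_le (s := (S ×ˢ Sᶜ).filter (fun p => G.Adj p.1 p.2))
      (f := fun p => s(p.1, p.2))))
  intro e he
  obtain ⟨he, x, hx, y, hy, rfl⟩ := Finset.mem_filter.mp he
  refine Finset.mem_image.mpr ⟨(x, y), ?_, rfl⟩
  refine Finset.mem_filter.mpr ⟨Finset.mem_product.mpr ⟨hx, hy⟩, ?_⟩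
  simpa using he

/-- An almost-regular expander has conductance at least `lam / K`. -/
lemma conductance [Nonempty V] (G : SimpleGraph V) (K lam : ℝ) (hK : 1 ≤ K) (hlam : 0 < lam)
    (hreg : AlmostRegular K G) (hexp : IsExpander lam G) (S : Finset V)
    (hS : 2 * S.card ≤ Fintype.card V) :
    lam / K * ∑ v ∈ S, ∑ u, adjWeight G v u ≤ ∑ v ∈ S, ∑ u ∈ Sᶜ, adjWeight G v u := by
  have hK0 : 0 < K := by linarith
  have hn : (0 : ℝ) < Fintype.card V := by exact_mod_cast Fintype.card_pos
  have hS' : (2 : ℝ) * S.card ≤ Fintype.card V := by exact_mod_cast hS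
  have h1 := hexp S (by linarith)
  have h2 := crossCount_le G S
  have hmin : (G.minDegree : ℝ) ≤ avgDeg G := by
    unfold avgDeg
    rw [le_div_iff₀ hn]
    have : ∑ _v : V, (G.minDegree : ℝ) ≤ ∑ v : V, (G.degree v : ℝ) :=
      Finset.sum_le_sum fun v _ => by exact_mod_cast G.minDegree_le_degree v
    simpa [mul_comm] using this
  have hvol : ∑ v ∈ S, ∑ u, adjWeight G v u ≤ S.card * (K * avgDeg G) := by
    simp_rw [sum_adjWeight]
    rw [← nsmul_eq_mul]
    refine Finset.sum_le_card_nsmul _ _ _ fun v _ => ?_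
    have h3 : (G.degree v : ℝ) ≤ G.maxDegree := by exact_mod_cast G.degree_le_maxDegree v
    have h4 : (G.maxDegree : ℝ) ≤ K * G.minDegree := hreg
    nlinarith
  calc lam / K * ∑ v ∈ S, ∑ u, adjWeight G v u
      ≤ lam / K * (S.card * (K * avgDeg G)) := by gcongr
    _ = lam * avgDeg G * S.card := by field_simp
    _ ≤ _ := by linarith

/-- The sign function of a bipartition: `-1` on `P` and `1` off `P`. -/
noncomputable def sideSign (P : Finset V) (v : V) : ℝ := (-1) ^ (if v ∈ P then 1 else 0)

lemma sideSign_sq {V : Type} (P : Finset V) (v : V) : sideSign P v ^ 2 = 1 := by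
  unfold sideSign; split_ifs <;> norm_num

lemma sideSign_adj {V : Type} (G : SimpleGraph V) (P : Finset V) (hP : IsBipartition G P) (v u : V) :
    adjWeight G v u * sideSign P u = -(adjWeight G v u * sideSign P v) := by
  unfold adjWeight sideSign
  split_ifs with h hu hv hv
  · exact absurd hu ((hP v u h).mp hv)
  · norm_num
  · norm_num
  · exact absurd ((hP v u h).mpr hu) hv
  all_goals simp

lemma transMat_apply (G : SimpleGraph V) (f : V → ℝ) (v : V) (hv : 0 < G.degree v) :
    (∑ u, adjWeight G v u) * (transMat G).mulVec f v = ∑ u, adjWeight G v u * f u := by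
  have hv' : (G.degree v : ℝ) ≠ 0 := by exact_mod_cast hv.ne'
  rw [sum_adjWeight, Matrix.mulVec, dotProduct, Finset.mul_sum]
  refine Finset.sum_congr rfl fun u _ => ?_
  unfold transMat adjWeight
  split_ifs
  · field_simp
  · simp

lemma iterate_contract [Nonempty V] (G : SimpleGraph V) (P : Finset V) (hP : IsBipartition G P)
    (hpos : ∀ v : V, 0 < G.degree v) (φ : ℝ) (hφ : 0 ≤ φ) (hφ1 : φ ≤ 1)
    (hexp : ∀ S : Finset V, 2 * S.card ≤ Fintype.card V →
      φ * ∑ v ∈ S, ∑ u, adjWeight G v u ≤ ∑ v ∈ S, ∑ u ∈ Sᶜ, adjWeight G v u)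
    (f : V → ℝ) (hf1 : ∑ v, (∑ u, adjWeight G v u) * f v = 0)
    (hf2 : ∑ v, (∑ u, adjWeight G v u) * (sideSign P v * f v) = 0) (k : ℕ) :
    ∑ v, (∑ u, adjWeight G v u) * ((transMat G ^ k).mulVec f v) = 0 ∧
    ∑ v, (∑ u, adjWeight G v u) * (sideSign P v * (transMat G ^ k).mulVec f v) = 0 ∧
    ∑ v, (∑ u, adjWeight G v u) * ((transMat G ^ k).mulVec f v) ^ 2
      ≤ (1 - φ ^ 2 / 2) ^ (2 * k) * ∑ v, (∑ u, adjWeight G v u) * f v ^ 2 := by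
  induction k with
  | zero => simp [hf1, hf2]
  | succ k ih =>
    obtain ⟨i1, i2, i3⟩ := ih
    have h := step_contract (adjWeight G) (adjWeight_symm G) (adjWeight_nonneg G) φ hφ hφ1 hexp
      (sideSign P) (sideSign_sq P) (sideSign_adj G P hP) ((transMat G ^ k).mulVec f)
      ((transMat G ^ (k + 1)).mulVec f) (fun v => by
        rw [pow_succ', ← Matrix.mulVec_mulVec]
        exact transMat_apply G _ v (hpos v)) i1 i2
    refine ⟨h.1, h.2.1, h.2.2.trans ?_⟩
    calc _ ≤ (1 - φ ^ 2 / 2) ^ 2 * ((1 - φ ^ 2 / 2) ^ (2 * k)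
          * ∑ v, (∑ u, adjWeight G v u) * f v ^ 2) :=
          mul_le_mul_of_nonneg_left i3 (sq_nonneg _)
      _ = _ := by ring

lemma transMat_pow_one (G : SimpleGraph V) (hpos : ∀ v : V, 0 < G.degree v) (k : ℕ) :
    (transMat G ^ k).mulVec (fun _ => 1) = fun _ => 1 := by
  induction k with
  | zero => simp
  | succ k ih =>
    rw [pow_succ', ← Matrix.mulVec_mulVec, ih]
    ext v
    have hv : (∑ u, adjWeight G v u) ≠ 0 := by
      rw [sum_adjWeight]; exact_mod_cast (hpos v).ne'
    refine mul_left_cancel₀ hv ?_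
    rw [transMat_apply G _ v (hpos v)]
    simp

lemma transMat_pow_sideSign (G : SimpleGraph V) (P : Finset V) (hP : IsBipartition G P)
    (hpos : ∀ v : V, 0 < G.degree v) (k : ℕ) :
    (transMat G ^ k).mulVec (sideSign P) = fun v => (-1) ^ k * sideSign P v := by
  induction k with
  | zero => simp
  | succ k ih =>
    rw [pow_succ', ← Matrix.mulVec_mulVec, ih]
    ext v
    have hv : (∑ u, adjWeight G v u) ≠ 0 := by
      rw [sum_adjWeight]; exact_mod_cast (hpos v).ne'
    refine mul_left_cancel₀ hv ?_
    rw [transMat_apply G _ v (hpos v), Finset.sum_mul]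
    refine Finset.sum_congr rfl fun u _ => ?_
    rw [pow_succ]
    linear_combination (-1) ^ k * sideSign_adj G P hP v u

/-- The two sides of a bipartite graph have the same volume. -/
lemma sum_degree_sideSign (G : SimpleGraph V) (P : Finset V) (hP : IsBipartition G P) :
    ∑ v, (∑ u, adjWeight G v u) * sideSign P v = 0 := by
  have h1 := sum_right (adjWeight G) (adjWeight_symm G) (sideSign P)
  have h2 := sum_left (adjWeight G) (sideSign P)
  simp_rw [sideSign_adj G P hP, Finset.sum_neg_distrib] at h1
  linarith

/-- The deviation of `M ^ k` from its limit in entry `(v, u)` is `M ^ k f` at `v`, where `f` is the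
projection of the indicator of `u` to the complement of the two trivial eigenfunctions. The bound
follows since `f` has squared norm at most `d(u) ≤ n`, and evaluation at `v` costs `1 / d(v) ≤ 1`. -/
lemma deviation_sq [Nonempty V] (G : SimpleGraph V) (P : Finset V) (hP : IsBipartition G P)
    (hpos : ∀ v : V, 0 < G.degree v) (φ : ℝ) (hφ : 0 ≤ φ) (hφ1 : φ ≤ 1)
    (hexp : ∀ S : Finset V, 2 * S.card ≤ Fintype.card V →
      φ * ∑ v ∈ S, ∑ u, adjWeight G v u ≤ ∑ v ∈ S, ∑ u ∈ Sᶜ, adjWeight G v u)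
    (k : ℕ) (v u : V) :
    (((transMat G ^ k) v u) - ((G.degree u : ℝ) / (2 * (G.edgeFinset.card : ℝ))) *
      (1 + (-1 : ℝ) ^ (k + (if v ∈ P then 1 else 0) + (if u ∈ P then 1 else 0)))) ^ 2
      ≤ (1 - φ ^ 2 / 2) ^ (2 * k) * Fintype.card V := by
  set T : ℝ := 2 * (G.edgeFinset.card : ℝ) with hT
  have hTsum : ∑ x, ∑ y, adjWeight G x y = T := by
    simp_rw [sum_adjWeight]
    rw [hT]
    exact_mod_cast G.sum_degrees_eq_twice_card_edges
  have hTpos : 0 < T := by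
    rw [← hTsum]
    refine Finset.sum_pos (fun x _ => ?_) univ_nonempty
    rw [sum_adjWeight]; exact_mod_cast hpos x
  have hdu : (0 : ℝ) < G.degree u := by exact_mod_cast hpos u
  have hdv : (1 : ℝ) ≤ G.degree v := by exact_mod_cast hpos v
  set p : ℝ := (G.degree u : ℝ) / T with hp
  have hp0 : 0 ≤ p := by positivity
  have hpT : p * T = G.degree u := by rw [hp]; field_simp
  set χ := sideSign P with hχ
  set f : V → ℝ := fun x => (Pi.single u 1 : V → ℝ) x - p * (1 + χ u * χ x) with hf
  have hbal := sum_degree_sideSign G P hP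
  rw [← hχ] at hbal
  have hsingle : ∀ c : V → ℝ, ∑ x, (∑ y, adjWeight G x y) * (c x * (Pi.single u 1 : V → ℝ) x)
      = G.degree u * c u := by
    intro c
    rw [Finset.sum_eq_single u]
    · simp [sum_adjWeight]
    · intro b _ hb; simp [hb]
    · simp
  have hsq : ∀ x, χ x ^ 2 = 1 := sideSign_sq P
  have hf1 : ∑ x, (∑ y, adjWeight G x y) * f x = 0 := by
    have h1 : ∑ x, (∑ y, adjWeight G x y) * f x
        = ∑ x, (∑ y, adjWeight G x y) * ((1 : ℝ) * (Pi.single u 1 : V → ℝ) x)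
          - p * ∑ x, ∑ y, adjWeight G x y
          - p * χ u * ∑ x, (∑ y, adjWeight G x y) * χ x := by
      rw [Finset.mul_sum, Finset.mul_sum, ← Finset.sum_sub_distrib, ← Finset.sum_sub_distrib]
      exact Finset.sum_congr rfl fun x _ => by simp only [hf]; ring
    rw [h1, hsingle (fun _ => 1), hbal, hTsum, hpT]; ring
  have hf2 : ∑ x, (∑ y, adjWeight G x y) * (χ x * f x) = 0 := by
    have h1 : ∑ x, (∑ y, adjWeight G x y) * (χ x * f x)
        = ∑ x, (∑ y, adjWeight G x y) * (χ x * (Pi.single u 1 : V → ℝ) x)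
          - p * ∑ x, (∑ y, adjWeight G x y) * χ x
          - p * χ u * ∑ x, ∑ y, adjWeight G x y := by
      rw [Finset.mul_sum, Finset.mul_sum, ← Finset.sum_sub_distrib, ← Finset.sum_sub_distrib]
      refine Finset.sum_congr rfl fun x _ => ?_
      simp only [hf]
      linear_combination (-(∑ y, adjWeight G x y) * p * χ u) * hsq x
    rw [h1, hsingle χ, hbal, hTsum]
    linear_combination (-χ u) * hpT
  -- As `f` is orthogonal to `1` and `χ`, its squared norm is its inner product with the indicator.
  have hfn : ∑ x, (∑ y, adjWeight G x y) * f x ^ 2 ≤ G.degree u := by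
    have h1 : ∑ x, (∑ y, adjWeight G x y) * f x ^ 2
        = ∑ x, (∑ y, adjWeight G x y) * (f x * (Pi.single u 1 : V → ℝ) x)
          - p * ∑ x, (∑ y, adjWeight G x y) * f x
          - p * χ u * ∑ x, (∑ y, adjWeight G x y) * (χ x * f x) := by
      rw [Finset.mul_sum, Finset.mul_sum, ← Finset.sum_sub_distrib, ← Finset.sum_sub_distrib]
      refine Finset.sum_congr rfl fun x _ => ?_
      rw [show f x ^ 2 = f x * ((Pi.single u 1 : V → ℝ) x - p * (1 + χ u * χ x)) by
        rw [pow_two]]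
      ring
    rw [h1, hsingle f, hf1, hf2]
    have h2 : f u = 1 - 2 * p := by
      simp only [hf, Pi.single_eq_same]
      linear_combination (-p) * hsq u
    rw [h2]
    nlinarith [mul_nonneg hdu.le hp0]
  have hval : (transMat G ^ k).mulVec f v = ((transMat G ^ k) v u) - p *
      (1 + (-1 : ℝ) ^ (k + (if v ∈ P then 1 else 0) + (if u ∈ P then 1 else 0))) := by
    have h1 : f = (Pi.single u 1 : V → ℝ) - p • (fun _ => (1 : ℝ)) - (p * χ u) • χ := by
      ext x
      simp only [hf, Pi.sub_apply, Pi.smul_apply, smul_eq_mul]; ring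
    rw [h1, Matrix.mulVec_sub, Matrix.mulVec_sub, Matrix.mulVec_smul, Matrix.mulVec_smul,
      transMat_pow_one G hpos, hχ, transMat_pow_sideSign G P hP hpos]
    simp only [Pi.sub_apply, Pi.smul_apply, smul_eq_mul, Matrix.mulVec_single_one,
      Matrix.col_apply, pow_add, sideSign]
    ring
  obtain ⟨-, -, h3⟩ := iterate_contract G P hP hpos φ hφ hφ1 hexp f hf1 hf2 k
  rw [← hval]
  have h4 : (∑ y, adjWeight G v y) * ((transMat G ^ k).mulVec f v) ^ 2
      ≤ ∑ x, (∑ y, adjWeight G x y) * ((transMat G ^ k).mulVec f x) ^ 2 := by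
    refine Finset.single_le_sum (f := fun x =>
      (∑ y, adjWeight G x y) * ((transMat G ^ k).mulVec f x) ^ 2) (fun x _ => ?_) (mem_univ v)
    rw [sum_adjWeight]; positivity
  rw [sum_adjWeight] at h4
  have hr : 0 ≤ (1 - φ ^ 2 / 2) ^ (2 * k) := by rw [pow_mul]; positivity
  have hun : (G.degree u : ℝ) ≤ Fintype.card V := by exact_mod_cast (G.degree_lt_card_verts u).le
  calc ((transMat G ^ k).mulVec f v) ^ 2
      ≤ (G.degree v : ℝ) * ((transMat G ^ k).mulVec f v) ^ 2 :=
        le_mul_of_one_le_left (sq_nonneg _) hdv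
    _ ≤ (1 - φ ^ 2 / 2) ^ (2 * k) * ∑ x, (∑ y, adjWeight G x y) * f x ^ 2 := h4.trans h3
    _ ≤ _ := mul_le_mul_of_nonneg_left (hfn.trans hun) hr

end Graph

/-- The bound of `deviation_sq` at the chosen time is at most the square of `1 / n ^ 2`. Rounding the
time down costs a factor of at most `exp (φ ^ 2)`, absorbed by the slack in the exponent. -/
lemma decay_bound (n : ℕ) (hn : 3 ≤ n) (φ : ℝ) (hφ : 0 < φ) (hφ1 : φ ≤ 1) :
    (1 - φ ^ 2 / 2) ^ (2 * ⌊30 / φ ^ 2 * Real.log n⌋₊) * n ≤ (1 / (n : ℝ) ^ 2) ^ 2 := by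
  set k := ⌊30 / φ ^ 2 * Real.log n⌋₊ with hk
  have hn0 : (0 : ℝ) < n := by positivity
  have hlog : 1 ≤ Real.log n := by
    rw [Real.le_log_iff_exp_le hn0]
    have : (3 : ℝ) ≤ n := by exact_mod_cast hn
    linarith [Real.exp_one_lt_d9]
  have hk1 : 30 / φ ^ 2 * Real.log n < k + 1 := Nat.lt_floor_add_one _
  have hk2 : 30 * Real.log n ≤ φ ^ 2 * (k + 1) := by
    have := mul_le_mul_of_nonneg_left hk1.le (sq_nonneg φ)
    calc 30 * Real.log n = φ ^ 2 * (30 / φ ^ 2 * Real.log n) := by field_simp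
      _ ≤ _ := this
  have hφ2 : φ ^ 2 ≤ 1 := by nlinarith
  have h1 : (1 - φ ^ 2 / 2) ^ (2 * k) ≤ Real.exp (-(φ ^ 2 / 2)) ^ (2 * k) :=
    pow_le_pow_left₀ (by linarith) (by linarith [Real.add_one_le_exp (-(φ ^ 2 / 2))]) _
  rw [← Real.exp_nat_mul] at h1
  have h2 : Real.exp ((2 * k : ℕ) * (-(φ ^ 2 / 2))) ≤ Real.exp (-(5 * Real.log n)) := by
    refine Real.exp_le_exp.mpr ?_
    push_cast
    nlinarith
  have h3 : Real.exp (-(5 * Real.log n)) = 1 / (n : ℝ) ^ 5 := by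
    rw [Real.exp_neg, one_div]
    congr 1
    rw [show (5 : ℝ) * Real.log n = ((5 : ℕ) : ℝ) * Real.log n by norm_num, Real.exp_nat_mul,
      Real.exp_log hn0]
  calc (1 - φ ^ 2 / 2) ^ (2 * k) * n ≤ 1 / (n : ℝ) ^ 5 * n := by
        refine mul_le_mul_of_nonneg_right ?_ hn0.le
        rw [← h3]; exact h1.trans h2
    _ = (1 / (n : ℝ) ^ 2) ^ 2 := by field_simp

/-- Let `K ≥ 1`, `lam > 0`, and let `G` be a connected `K`-almost-regular
bipartite graph on `n` vertices (`n` sufficiently large) with no isolated vertices which is a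
`lam`-expander. Then `G` has mixing time `k` for some `k ≤ (30K²/lam²)·log n`. -/
theorem stmt_8 :
    ∃ n₀ : ℕ, ∀ n : ℕ, n₀ ≤ n → ∀ (V : Type) [Fintype V], Fintype.card V = n →
      ∀ (K lam : ℝ), 1 ≤ K → 0 < lam → ∀ (G : SimpleGraph V) (P : Finset V),
        G.Connected → IsBipartition G P → (∀ v : V, 0 < G.degree v) →
        AlmostRegular K G → IsExpander lam G →
        ∃ k : ℕ, HasMixingTime G P k ∧ (k : ℝ) ≤ 30 * K ^ 2 / lam ^ 2 * Real.log n := by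
  refine ⟨3, ?_⟩
  intro n hn V _ hV K lam hK hlam G P _ hP hpos hreg hexp
  have hK0 : 0 < K := by linarith
  have : Nonempty V := Fintype.card_pos_iff.mp (by omega)
  have hcond := conductance G K lam hK hlam hreg hexp
  set φ := lam / K with hφdef
  have hφ : 0 < φ := div_pos hlam hK0
  -- A single vertex has expansion at most `1`.
  have hφ1 : φ ≤ 1 := by
    obtain ⟨x⟩ := this
    have h1 := hcond {x} (by simp; omega)
    simp only [Finset.sum_singleton] at h1
    have h2 : ∑ u ∈ ({x} : Finset V)ᶜ, adjWeight G x u ≤ ∑ u, adjWeight G x u :=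
      Finset.sum_le_sum_of_subset_of_nonneg (Finset.subset_univ _)
        fun u _ _ => adjWeight_nonneg G x u
    have h3 : 0 < ∑ u, adjWeight G x u := by
      rw [sum_adjWeight]; exact_mod_cast hpos x
    nlinarith
  have hlog : 0 ≤ Real.log n := Real.log_natCast_nonneg n
  refine ⟨⌊30 / φ ^ 2 * Real.log n⌋₊, ?_, ?_⟩
  · intro v u
    refine abs_le_of_sq_le_sq ?_ (by positivity)
    refine (deviation_sq G P hP hpos φ hφ.le hφ1 hcond _ v u).trans ?_
    rw [hV]
    exact decay_bound n hn φ hφ hφ1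
  · refine (Nat.floor_le (by positivity)).trans (le_of_eq ?_)
    rw [hφdef]
    field_simp
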